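/- arXiv:1712.02243 — 3 statements merged into one kernel-verified Lean document; each statement's English description precedes it below -/
import Mathlib

section
/- If f:X→Y is a coarse map between metric spaces then the induced map soe(f):soe(X)→soe(Y), [φ] ↦ [f∘φ], is well defined (if φ,ψ represent the same endpoint of X then f∘φ, f∘ψ represent the same endpoint of Y) and uniformly continuous: for every coarse cover 𝒰 = (Uᵢ)ᵢ of Y the family f⁻¹𝒰 = (f⁻¹(Uᵢ))ᵢ is a coarse cover of X, and q ∈ f⁻¹𝒰[p] implies soe(f)(q) ∈ 𝒰[soe(f)(p)] for all endpoints p,q of X. -/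
/-!
A coarse map `f` pushes entourages forward and pulls coentourages back. Pulling back the
coentourage `(⋃ Uᵢ × Uᵢ)ᶜ` shows that `f⁻¹𝒰` is a coarse cover, and pulling back `f(A) × U` shows
that `A ≬ f⁻¹(U)` implies `f(A) ≬ U`. Hence `f` maps `st(φ(ℕ), f⁻¹𝒰)` into `st(f(φ(ℕ)), 𝒰)`, and the
image entourage `(f × f)(E)` witnesses both inclusions defining `𝒰[·]`. For well-definedness, the
image of `E ∩ (ψ(ℕ) × X)` carries `f(ψ(ℕ))` exactly onto `f(φ(ℕ))`.
-/

open Set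

variable {X Y : Type*}

/-- A set `E ⊆ X × X` is an entourage if `sup_{(x,y) ∈ E} d(x,y) < ∞`. -/
def IsEntourage [MetricSpace X] (E : Set (X × X)) : Prop :=
  ∃ C : ℝ, ∀ p ∈ E, dist p.1 p.2 ≤ C

/-- A set `B ⊆ X` is bounded if `B × B` is an entourage. -/
def IsBoundedSet [MetricSpace X] (B : Set X) : Prop :=
  IsEntourage (B ×ˢ B)

/-- A set `C ⊆ X × X` is a coentourage if for every entourage `E` there is a bounded
set `B` with `E ∩ C ⊆ B × B`. -/
def IsCoentourage [MetricSpace X] (C : Set (X × X)) : Prop :=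
  ∀ E : Set (X × X), IsEntourage E → ∃ B : Set X, IsBoundedSet B ∧ E ∩ C ⊆ B ×ˢ B

/-- `A` and `B` are close (`A ≬ B`) if `A × B` is not a coentourage. -/
def CloseSets [MetricSpace X] (A B : Set X) : Prop :=
  ¬ IsCoentourage (A ×ˢ B)

/-- `E[A] = {y : (x,y) ∈ E for some x ∈ A}`. -/
def entImage (E : Set (X × X)) (A : Set X) : Set X :=
  {y | ∃ x ∈ A, (x, y) ∈ E}

/-- A finite family `U i` of subsets of `X` is a coarse cover of `X` if
`(X × X) ∖ ⋃ i, U i × U i` is a coentourage. -/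
def IsCoarseCover [MetricSpace X] {ι : Type*} (U : ι → Set X) : Prop :=
  IsCoentourage ((⋃ i, U i ×ˢ U i)ᶜ)

/-- The coarse star `st(S, 𝒰) = ⋃ {Uᵢ : S ≬ Uᵢ}`. -/
def coarseStar [MetricSpace X] {ι : Type*} (S : Set X) (U : ι → Set X) : Set X :=
  ⋃ i ∈ {i | CloseSets S (U i)}, U i

/-- `𝒱` coarsely star refines `𝒰` if for every `j` there are an `i` and an entourage `E`
with `st(Vⱼ, 𝒱) ⊆ E[Uᵢ]`. -/
def IsCoarseStarRefinement [MetricSpace X] {ι κ : Type*} (V : κ → Set X) (U : ι → Set X) : Prop :=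
  ∀ j, ∃ i, ∃ E : Set (X × X), IsEntourage E ∧ coarseStar (V j) V ⊆ entImage E (U i)

/-- `f : X → Y` is a coarse map if it maps entourages to entourages and preimages of
bounded sets are bounded. -/
def IsCoarseMap [MetricSpace X] [MetricSpace Y] (f : X → Y) : Prop :=
  (∀ E : Set (X × X), IsEntourage E → IsEntourage (Prod.map f f '' E)) ∧
  (∀ A : Set Y, IsBoundedSet A → IsBoundedSet (f ⁻¹' A))

/-- Two maps `f g : X → Y` are close if `{(f x, g x) : x ∈ X}` is an entourage of `Y`. -/
def CloseMaps [MetricSpace X] [MetricSpace Y] (f g : X → Y) : Prop :=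
  IsEntourage (Set.range fun x => (f x, g x))

/-- Two coarse maps `φ ψ : ℕ → X` represent the same endpoint of `X` if there is an
entourage `E` of `X` with `E[ψ(ℕ)] = φ(ℕ)`. -/
def SameEnd [MetricSpace X] (φ ψ : ℕ → X) : Prop :=
  ∃ E : Set (X × X), IsEntourage E ∧ entImage E (Set.range ψ) = Set.range φ

/-- For endpoints `p, q` represented by `φ, ψ`, `q ∈ 𝒰[p]` means there is an entourage `E`
with `ψ(ℕ) ⊆ E[st(φ(ℕ), 𝒰)]` and `φ(ℕ) ⊆ E[st(ψ(ℕ), 𝒰)]`. -/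
def inUNbhd [MetricSpace X] {ι : Type*} (U : ι → Set X) (φ ψ : ℕ → X) : Prop :=
  ∃ E : Set (X × X), IsEntourage E ∧
    Set.range ψ ⊆ entImage E (coarseStar (Set.range φ) U) ∧
    Set.range φ ⊆ entImage E (coarseStar (Set.range ψ) U)

/-- Coentourages pull back along coarse maps: a pair of `E` lying in the pullback of `C` is sent
into `(f × f)(E) ∩ C ⊆ B × B`, so it lies in the square of the bounded set `f ⁻¹' B`. -/
theorem IsCoarseMap.isCoentourage_preimage [MetricSpace X] [MetricSpace Y] {f : X → Y}
    (hf : IsCoarseMap f) {C : Set (Y × Y)} (hC : IsCoentourage C) :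
    IsCoentourage (Prod.map f f ⁻¹' C) := by
  intro E hE
  obtain ⟨B, hB, hsub⟩ := hC _ (hf.1 E hE)
  refine ⟨f ⁻¹' B, hf.2 B hB, ?_⟩
  rintro ⟨a, b⟩ ⟨hab, hCab⟩
  exact hsub ⟨⟨(a, b), hab, rfl⟩, hCab⟩

theorem IsCoentourage.mono [MetricSpace X] {C D : Set (X × X)} (hD : IsCoentourage D)
    (h : C ⊆ D) : IsCoentourage C := by
  intro E hE
  obtain ⟨B, hB, hsub⟩ := hD E hE
  exact ⟨B, hB, fun p hp => hsub ⟨hp.1, h hp.2⟩⟩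

theorem IsCoarseMap.closeSets_image [MetricSpace X] [MetricSpace Y] {f : X → Y}
    (hf : IsCoarseMap f) {A : Set X} {U : Set Y} (h : CloseSets A (f ⁻¹' U)) :
    CloseSets (f '' A) U := fun hco =>
  h ((hf.isCoentourage_preimage hco).mono fun _ hp => ⟨mem_image_of_mem f hp.1, hp.2⟩)

theorem IsCoarseMap.range_comp_subset_entImage [MetricSpace X] [MetricSpace Y] {f : X → Y}
    (hf : IsCoarseMap f) {ι : Type*} {U : ι → Set Y} {φ ψ : ℕ → X} {E : Set (X × X)}
    (h : range ψ ⊆ entImage E (coarseStar (range φ) fun i => f ⁻¹' U i)) :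
    range (f ∘ ψ) ⊆ entImage (Prod.map f f '' E) (coarseStar (range (f ∘ φ)) U) := by
  rintro _ ⟨n, rfl⟩
  obtain ⟨x, hx, hE⟩ := h ⟨n, rfl⟩
  obtain ⟨i, hi, hxi⟩ := mem_iUnion₂.1 hx
  refine ⟨f x, mem_iUnion₂.2 ⟨i, ?_, hxi⟩, (x, ψ n), hE, rfl⟩
  rw [range_comp]
  exact hf.closeSets_image hi

/-- a coarse map induces a well-defined uniformly continuous map on endpoints. -/
theorem soe_map_wellDefined_uniformlyContinuous [MetricSpace X] [MetricSpace Y]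
    (f : X → Y) (hf : IsCoarseMap f) :
    -- well defined
    (∀ φ ψ : ℕ → X, IsCoarseMap φ → IsCoarseMap ψ → SameEnd φ ψ →
      SameEnd (f ∘ φ) (f ∘ ψ)) ∧
    -- uniformly continuous
    (∀ (ι : Type) [Fintype ι] (U : ι → Set Y), IsCoarseCover U →
      IsCoarseCover (fun i => f ⁻¹' U i) ∧
      ∀ φ ψ : ℕ → X, IsCoarseMap φ → IsCoarseMap ψ →
        inUNbhd (fun i => f ⁻¹' U i) φ ψ → inUNbhd U (f ∘ φ) (f ∘ ψ)) := by
  refine ⟨?_, ?_⟩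
  · rintro φ ψ - - ⟨E, hE, hEq⟩
    -- Only the pairs of `E` starting in `ψ(ℕ)` are pushed forward: `f` need not be injective, so
    -- other pairs of `E` could contribute points outside `f(φ(ℕ))`.
    refine ⟨Prod.map f f '' {p ∈ E | p.1 ∈ range ψ}, hf.1 _ ?_, ?_⟩
    · obtain ⟨C, hC⟩ := hE
      exact ⟨C, fun p hp => hC p hp.1⟩
    · rw [range_comp f φ, ← hEq]
      ext y
      constructor
      · rintro ⟨_, -, ⟨a, b⟩, ⟨hab, ha⟩, h⟩
        exact ⟨b, ⟨a, ha, hab⟩, congrArg Prod.snd h⟩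
      · rintro ⟨b, ⟨a, ha, hab⟩, rfl⟩
        refine ⟨f a, ?_, (a, b), ⟨hab, ha⟩, rfl⟩
        rw [range_comp]
        exact mem_image_of_mem f ha
  · intro ι _ U hU
    refine ⟨(hf.isCoentourage_preimage hU).mono ?_, ?_⟩
    · rintro p hp hmem
      obtain ⟨i, hi⟩ := mem_iUnion.1 hmem
      exact hp (mem_iUnion.2 ⟨i, hi⟩)
    · rintro φ ψ - - ⟨E, hE, h₁, h₂⟩
      exact ⟨_, hf.1 E hE, hf.range_comp_subset_entImage h₁, hf.range_comp_subset_entImage h₂⟩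
end

section
/- Let X be a metric space and let 𝒱 be a coarse cover of X that coarsely star refines a coarse cover 𝒰 of X. Then for all endpoints p,q,r of X, q ∈ 𝒱[p] and r ∈ 𝒱[q] imply r ∈ 𝒰[p]; consequently the cover (𝒱[p])_p of soe(X) star refines the cover (𝒰[p])_p. -/
/-!
The relation `inUNbhd` is symmetric, so both claims reduce to one inclusion: if
`ψ(ℕ) ⊆ E[st(φ(ℕ), 𝒱)]` and `ρ(ℕ) ⊆ E'[st(ψ(ℕ), 𝒱)]`, then `ρ(ℕ) ⊆ F[st(φ(ℕ), 𝒰)]` for some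
entourage `F` (`subset_entImage_star_trans`).

A member `Vⱼ` close to `ψ(ℕ)` has an unbounded set `T` of points of `ψ(ℕ)` within bounded distance.
Each point of `T` is also within bounded distance of some `Vₖ` with `φ(ℕ) ≬ Vₖ`. As `𝒱` is
finite, one such `Vₖ` serves an unbounded part of `T`, so `Vₖ ≬ Vⱼ`. Moreover `Vₖ ≬ Vₖ`, so both
`Vⱼ` and `Vₖ` lie in `st(Vₖ, 𝒱) ⊆ E''[Uᵢ]` for some `i`. From `φ(ℕ) ≬ Vₖ` follows `φ(ℕ) ≬ Uᵢ`,
so `Vⱼ` is within bounded distance of `st(φ(ℕ), 𝒰)`; the bound can be chosen independently of `j`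
because `𝒱` is finite.

Closeness is handled through `closeSets_iff`: `A ≬ B` means that for some radius `C` the points of
`A` within `C` of `B` form an unbounded set.
-/

open Set

variable {X Y : Type*}

theorem isBoundedSet_iff_isBounded [MetricSpace X] (B : Set X) :
    IsBoundedSet B ↔ Bornology.IsBounded B := by
  rw [Metric.isBounded_iff]
  constructor
  · rintro ⟨C, hC⟩
    exact ⟨C, fun x hx y hy => hC (x, y) ⟨hx, hy⟩⟩
  · rintro ⟨C, hC⟩
    exact ⟨C, fun p hp => hC hp.1 hp.2⟩

theorem isBounded_of_near [MetricSpace X] {S T : Set X} {C : ℝ} (hS : Bornology.IsBounded S)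
    (h : ∀ t ∈ T, ∃ s ∈ S, dist s t ≤ C) : Bornology.IsBounded T := by
  obtain ⟨D, hD⟩ := Metric.isBounded_iff.1 hS
  refine Metric.isBounded_iff.2 ⟨C + D + C, fun t ht u hu => ?_⟩
  obtain ⟨s, hs, hst⟩ := h t ht
  obtain ⟨s', hs', hst'⟩ := h u hu
  have h1 := dist_triangle4 t s s' u
  have h2 := hD hs hs'
  rw [dist_comm t s] at h1
  linarith

/-- `A ≬ B` holds exactly when, for some radius, the points of `A` within that radius of `B` form
an unbounded set. -/
theorem closeSets_iff [MetricSpace X] (A B : Set X) :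
    CloseSets A B ↔ ∃ C : ℝ, ¬ Bornology.IsBounded {a | a ∈ A ∧ ∃ b ∈ B, dist a b ≤ C} := by
  unfold CloseSets
  rw [not_iff_comm]
  push Not
  constructor
  · rintro h E ⟨C, hC⟩
    have hS := h C
    refine ⟨{a | a ∈ A ∧ ∃ b ∈ B, dist a b ≤ C} ∪
      {y | ∃ s ∈ {a | a ∈ A ∧ ∃ b ∈ B, dist a b ≤ C}, dist s y ≤ C}, ?_, ?_⟩
    · rw [isBoundedSet_iff_isBounded]
      exact hS.union (isBounded_of_near hS fun t ht => ht)
    · rintro ⟨x, y⟩ ⟨hE, hx, hy⟩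
      have hd : dist x y ≤ C := hC _ hE
      have hxS : x ∈ {a | a ∈ A ∧ ∃ b ∈ B, dist a b ≤ C} := ⟨hx, y, hy, hd⟩
      exact ⟨Or.inl hxS, Or.inr ⟨x, hxS, hd⟩⟩
  · intro h C
    obtain ⟨B', hB', hsub⟩ := h {p | dist p.1 p.2 ≤ C} ⟨C, fun p hp => hp⟩
    refine ((isBoundedSet_iff_isBounded B').1 hB').subset ?_
    rintro a ⟨ha, b, hb, hab⟩
    exact (hsub (show (a, b) ∈ _ from ⟨hab, ha, hb⟩)).1

/-- Two sets are close as soon as an unbounded set stays within bounded distance of both. -/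
theorem closeSets_of_near [MetricSpace X] {A B T : Set X} {C D : ℝ}
    (hT : ¬ Bornology.IsBounded T) (hA : ∀ t ∈ T, ∃ a ∈ A, dist a t ≤ C)
    (hB : ∀ t ∈ T, ∃ b ∈ B, dist b t ≤ D) : CloseSets A B := by
  rw [closeSets_iff]
  refine ⟨C + D, fun hS => hT (isBounded_of_near (C := C) hS fun t ht => ?_)⟩
  obtain ⟨a, ha, hat⟩ := hA t ht
  obtain ⟨b, hb, hbt⟩ := hB t ht
  refine ⟨a, ⟨ha, b, hb, ?_⟩, hat⟩
  have h1 := dist_triangle a t b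
  rw [dist_comm t b] at h1
  linarith

theorem CloseSets.of_subset_entImage [MetricSpace X] {A B B' : Set X} {E : Set (X × X)}
    (h : CloseSets A B) (hE : IsEntourage E) (hB : B ⊆ entImage E B') : CloseSets A B' := by
  obtain ⟨D, hD⟩ := hE
  obtain ⟨C, hC⟩ := (closeSets_iff A B).1 h
  refine closeSets_of_near (C := 0) (D := D + C) hC
    (fun t ht => ⟨t, ht.1, (dist_self t).le⟩) ?_
  rintro t ⟨-, b, hb, htb⟩
  obtain ⟨b', hb', hbE⟩ := hB hb
  have h1 : dist b' b ≤ D := hD _ hbE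
  have h2 := dist_triangle b' b t
  rw [dist_comm b t] at h2
  exact ⟨b', hb', by linarith⟩

theorem subset_coarseStar [MetricSpace X] {ι : Type*} {S : Set X} {U : ι → Set X} {i : ι}
    (h : CloseSets S (U i)) : U i ⊆ coarseStar S U :=
  fun _ hx => Set.mem_biUnion (show i ∈ {i | CloseSets S (U i)} from h) hx

/-- A member `V j` close to `B` is controlled by the `𝒰`-star of `A`, provided `B` is controlled
by the `𝒱`-star of `A`. -/
theorem member_subset_entImage_star [MetricSpace X] {ι κ : Type*} [Finite κ]
    {V : κ → Set X} {U : ι → Set X} (href : IsCoarseStarRefinement V U) {A B : Set X}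
    {E : Set (X × X)} (hE : IsEntourage E) (hB : B ⊆ entImage E (coarseStar A V)) {j : κ}
    (hj : CloseSets B (V j)) :
    ∃ F : Set (X × X), IsEntourage F ∧ V j ⊆ entImage F (coarseStar A U) := by
  obtain ⟨D, hD⟩ := hE
  obtain ⟨C, hC⟩ := (closeSets_iff B (V j)).1 hj
  set T := {b | b ∈ B ∧ ∃ v ∈ V j, dist b v ≤ C}
  -- Pigeonhole: the pieces of `T` near the various `V k` with `A ≬ V k` cover `T`.
  have hk : ∃ k, CloseSets A (V k) ∧
      ¬ Bornology.IsBounded {t | t ∈ T ∧ ∃ v ∈ V k, dist v t ≤ D} := by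
    by_contra! hcon
    refine hC (((Bornology.isBounded_biUnion (Set.toFinite {k | CloseSets A (V k)})).2
      fun k hk => hcon k hk).subset fun t ht => ?_)
    obtain ⟨x, hx, hxt⟩ := hB ht.1
    obtain ⟨k, hk, hxk⟩ := Set.mem_iUnion₂.1 hx
    exact Set.mem_biUnion hk ⟨ht, x, hxk, hD _ hxt⟩
  obtain ⟨k, hAk, hTk⟩ := hk
  have hkj : CloseSets (V k) (V j) := by
    refine closeSets_of_near hTk (fun t ht => ht.2) (D := C) ?_
    rintro t ⟨⟨-, v, hv, htv⟩, -⟩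
    exact ⟨v, hv, by rwa [dist_comm]⟩
  have hkk : CloseSets (V k) (V k) :=
    closeSets_of_near hTk (fun t ht => ht.2) (fun t ht => ht.2)
  obtain ⟨i, F, hF, hsub⟩ := href k
  have hAi : CloseSets A (U i) := hAk.of_subset_entImage hF ((subset_coarseStar hkk).trans hsub)
  refine ⟨F, hF, fun y hy => ?_⟩
  obtain ⟨x, hx, hxy⟩ := hsub (subset_coarseStar hkj hy)
  exact ⟨x, subset_coarseStar hAi hx, hxy⟩

theorem subset_entImage_star_trans [MetricSpace X] {ι κ : Type*} [Finite κ]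
    {V : κ → Set X} {U : ι → Set X} (href : IsCoarseStarRefinement V U) {A B R : Set X}
    {E E' : Set (X × X)} (hE : IsEntourage E) (hB : B ⊆ entImage E (coarseStar A V))
    (hE' : IsEntourage E') (hR : R ⊆ entImage E' (coarseStar B V)) :
    ∃ F : Set (X × X), IsEntourage F ∧ R ⊆ entImage F (coarseStar A U) := by
  have key : ∀ j, ∃ M : ℝ, CloseSets B (V j) →
      ∀ y ∈ V j, ∃ x ∈ coarseStar A U, dist x y ≤ M := by
    intro j
    by_cases hj : CloseSets B (V j)
    · obtain ⟨F, ⟨M, hM⟩, hsub⟩ := member_subset_entImage_star href hE hB hj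
      refine ⟨M, fun _ y hy => ?_⟩
      obtain ⟨x, hx, hxy⟩ := hsub hy
      exact ⟨x, hx, hM _ hxy⟩
    · exact ⟨0, fun h => absurd h hj⟩
  choose M hM using key
  obtain ⟨N, hN⟩ := (Set.finite_range M).bddAbove
  obtain ⟨D, hD⟩ := hE'
  refine ⟨{p | dist p.1 p.2 ≤ N + D}, ⟨N + D, fun p hp => hp⟩, fun r hr => ?_⟩
  obtain ⟨y, hy, hyr⟩ := hR hr
  obtain ⟨j, hj, hyj⟩ := Set.mem_iUnion₂.1 hy
  obtain ⟨x, hx, hxy⟩ := hM j hj y hyj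
  have h1 : dist y r ≤ D := hD _ hyr
  have h2 : M j ≤ N := hN ⟨j, rfl⟩
  exact ⟨x, hx, show dist x r ≤ N + D by linarith [dist_triangle x y r]⟩

theorem inUNbhd.symm [MetricSpace X] {ι : Type*} {U : ι → Set X} {φ ψ : ℕ → X}
    (h : inUNbhd U φ ψ) : inUNbhd U ψ φ := by
  obtain ⟨E, hE, h1, h2⟩ := h
  exact ⟨E, hE, h2, h1⟩

theorem inUNbhd.trans_of_starRefinement [MetricSpace X] {ι κ : Type*} [Finite κ]
    {V : κ → Set X} {U : ι → Set X} (href : IsCoarseStarRefinement V U) {φ ψ ρ : ℕ → X}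
    (h : inUNbhd V φ ψ) (h' : inUNbhd V ψ ρ) : inUNbhd U φ ρ := by
  obtain ⟨E, hE, h1, h2⟩ := h
  obtain ⟨E', hE', h3, h4⟩ := h'
  obtain ⟨F, ⟨C, hC⟩, hFρ⟩ := subset_entImage_star_trans href hE h1 hE' h3
  obtain ⟨G, ⟨D, hD⟩, hGφ⟩ := subset_entImage_star_trans href hE' h4 hE h2
  refine ⟨F ∪ G, ⟨max C D, ?_⟩, fun y hy => ?_, fun y hy => ?_⟩
  · rintro p (hp | hp)
    · exact (hC p hp).trans (le_max_left _ _)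
    · exact (hD p hp).trans (le_max_right _ _)
  · obtain ⟨x, hx, hxy⟩ := hFρ hy
    exact ⟨x, hx, Or.inl hxy⟩
  · obtain ⟨x, hx, hxy⟩ := hGφ hy
    exact ⟨x, hx, Or.inr hxy⟩

/-- chaining `𝒱`-neighborhoods of a coarse star refinement, and the
induced star refinement of covers of the space of ends. -/
theorem inUNbhd_trans_of_starRefinement [MetricSpace X] {ι κ : Type*} [Fintype ι] [Fintype κ]
    (V : κ → Set X) (U : ι → Set X) (hV : IsCoarseCover V) (hU : IsCoarseCover U)
    (href : IsCoarseStarRefinement V U) :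
    -- q ∈ 𝒱[p] and r ∈ 𝒱[q] imply r ∈ 𝒰[p]
    (∀ φ ψ ρ : ℕ → X, IsCoarseMap φ → IsCoarseMap ψ → IsCoarseMap ρ →
      inUNbhd V φ ψ → inUNbhd V ψ ρ → inUNbhd U φ ρ) ∧
    -- consequently (𝒱[p])_p star refines (𝒰[p])_p:
    -- q ∈ 𝒱[p] and q ∈ 𝒱[r] imply r ∈ 𝒰[p]
    (∀ φ ψ ρ : ℕ → X, IsCoarseMap φ → IsCoarseMap ψ → IsCoarseMap ρ →
      inUNbhd V φ ψ → inUNbhd V ρ ψ → inUNbhd U φ ρ) := by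
  exact ⟨fun φ ψ ρ _ _ _ h h' => h.trans_of_starRefinement href h',
    fun φ ψ ρ _ _ _ h h' => h.trans_of_starRefinement href h'.symm⟩
end

section
/- Let X be a metric space. The uniform space soe(X) is totally bounded: for every coarse cover 𝒰 = (Uᵢ)_{i∈I} of X there are finitely many subsets A₁,…,A_m of soe(X) whose union is soe(X) and with A_k × A_k ⊆ D_𝒰 for each k. More precisely, writing I(p) = {i ∈ I : φ(ℤ₊)≬Uᵢ} for an endpoint p represented by φ, and for S ⊆ I setting 𝒰(S) = {p ∈ soe(X) : I(p) ⊇ S and φ(ℤ₊) ⊆ E[⋃_{i∈S}Uᵢ] for some entourage E}, one has: q ∈ 𝒰[p] if and only if there is some S ⊆ I with p,q ∈ 𝒰(S), and (𝒰(S))_{S⊆I} is a finite cover of soe(X). -/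
/-!
Write `I(φ) = {i | φ(ℕ) ≬ Uᵢ}`. The image of a coarse map `φ : ℕ → X` is unbounded, and if `Uᵢ` is
not close to `φ(ℕ)`, then for each `R` only a bounded part of `φ(ℕ)` lies within `R` of `Uᵢ`. Hence,
the index set being finite, if all of `φ(ℕ)` except a bounded part lies within `R` of
`⋃_{i ∈ T} Uᵢ`, then all of it except a bounded part lies within `R` of `⋃_{i ∈ T ∩ I(φ)} Uᵢ`. The
latter union is nonempty by unboundedness, so the exceptional bounded part is absorbed by enlarging
`R`, and `φ ∈ 𝒰(T ∩ I(φ))`. This is `memUS_inter`.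

With `T = I`, a coarse cover covers all of `X` except a bounded set, so every `φ` lies in some
`𝒰(S)`. With `T = I(ψ)` and `T = I(φ)`, it shows that `ψ ∈ 𝒰[φ]` puts both in `𝒰(I(φ) ∩ I(ψ))`. The
converse is immediate, since `⋃_{i ∈ S} Uᵢ` is contained in both stars. The sets `𝒰(S)` are thus
finitely many `D_𝒰`-small sets covering the space of endpoints.
-/

open Set

variable {X Y : Type*}

/-- For a coarse cover `U` over `ι` and `S ⊆ ι`, the endpoint represented by `φ`
belongs to `𝒰(S)`: `I(p) ⊇ S` and `φ(ℕ) ⊆ E[⋃_{i ∈ S} U i]` for some entourage `E`. -/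
def memUS [MetricSpace X] {ι : Type*} (U : ι → Set X) (S : Set ι) (φ : ℕ → X) : Prop :=
  (∀ i ∈ S, CloseSets (Set.range φ) (U i)) ∧
  ∃ E : Set (X × X), IsEntourage E ∧ Set.range φ ⊆ entImage E (⋃ i ∈ S, U i)

lemma isBoundedSet_iff [MetricSpace X] {B : Set X} :
    IsBoundedSet B ↔ Bornology.IsBounded B := by
  rw [Metric.isBounded_iff]
  constructor
  · rintro ⟨C, hC⟩
    exact ⟨C, fun x hx y hy => hC (x, y) ⟨hx, hy⟩⟩
  · rintro ⟨C, hC⟩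
    exact ⟨C, fun p hp => hC hp.1 hp.2⟩

lemma IsCoarseMap.not_isBounded_range [MetricSpace X] {φ : ℕ → X} (hφ : IsCoarseMap φ) :
    ¬ Bornology.IsBounded (Set.range φ) := by
  intro h
  obtain ⟨C, hC⟩ := hφ.2 _ (isBoundedSet_iff.2 h)
  obtain ⟨n, hn⟩ := exists_nat_gt C
  have h0 := hC (n, 0) ⟨⟨n, rfl⟩, ⟨0, rfl⟩⟩
  simp [Nat.dist_eq] at h0
  linarith

/-- If `φ(ℕ)` lies, up to a bounded set, within bounded distance of `⋃_{i ∈ T} Uᵢ`, then the indices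
`i ∈ T` with `Uᵢ` not close to `φ(ℕ)` may be discarded, and no exceptional bounded set is needed. -/
lemma memUS_inter [MetricSpace X] {ι : Type*} [Finite ι] (U : ι → Set X) {φ : ℕ → X}
    (hφ : IsCoarseMap φ) (T : Set ι) (R : ℝ) {B₀ : Set X} (hB₀ : Bornology.IsBounded B₀)
    (h : ∀ n, φ n ∈ B₀ ∨ ∃ i ∈ T, ∃ u ∈ U i, dist (φ n) u ≤ R) :
    memUS U (T ∩ {i | CloseSets (Set.range φ) (U i)}) φ := by
  refine ⟨fun i hi => hi.2, ?_⟩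
  have hB : ∀ i, ∃ B : Set X, Bornology.IsBounded B ∧ (¬ CloseSets (Set.range φ) (U i) →
      ∀ n, ∀ u ∈ U i, dist (φ n) u ≤ R → φ n ∈ B) := by
    intro i
    by_cases hi : CloseSets (Set.range φ) (U i)
    · exact ⟨∅, Bornology.isBounded_empty, fun h => absurd hi h⟩
    · obtain ⟨B, hB, hsub⟩ := not_not.1 hi {p | dist p.1 p.2 ≤ R} ⟨R, fun p hp => hp⟩
      refine ⟨B, isBoundedSet_iff.1 hB, fun _ n u hu hd => ?_⟩
      exact (hsub (show (φ n, u) ∈ _ from ⟨hd, ⟨n, rfl⟩, hu⟩)).1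
  choose B hBb hB using hB
  have hK : Bornology.IsBounded (B₀ ∪ ⋃ i, B i) :=
    hB₀.union (Bornology.isBounded_iUnion.2 hBb)
  have key : ∀ n, φ n ∉ B₀ ∪ ⋃ i, B i →
      ∃ u ∈ ⋃ i ∈ T ∩ {i | CloseSets (Set.range φ) (U i)}, U i, dist (φ n) u ≤ R := by
    intro n hn
    rcases h n with h0 | ⟨i, hi, u, hu, hd⟩
    · exact absurd (Or.inl h0) hn
    · refine ⟨u, Set.mem_biUnion ⟨hi, ?_⟩ hu, hd⟩
      by_contra hc
      exact hn (Or.inr (Set.mem_iUnion.2 ⟨i, hB i hc n u hu hd⟩))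
  -- The image is unbounded, so some `φ n` escapes the exceptional set and yields a base point `u₀`.
  obtain ⟨n₀, hn₀⟩ : ∃ n, φ n ∉ B₀ ∪ ⋃ i, B i := by
    by_contra! hc
    exact hφ.not_isBounded_range (hK.subset (Set.range_subset_iff.2 hc))
  obtain ⟨u₀, hu₀, -⟩ := key n₀ hn₀
  obtain ⟨C, hC⟩ := hK.subset_closedBall u₀
  refine ⟨{p | dist p.1 p.2 ≤ max R C}, ⟨_, fun p hp => hp⟩, ?_⟩
  rintro _ ⟨n, rfl⟩
  by_cases hn : φ n ∈ B₀ ∪ ⋃ i, B i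
  · refine ⟨u₀, hu₀, ?_⟩
    rw [Set.mem_ofPred_eq, dist_comm]
    exact (Metric.mem_closedBall.1 (hC hn)).trans (le_max_right _ _)
  · obtain ⟨u, hu, hd⟩ := key n hn
    refine ⟨u, hu, ?_⟩
    rw [Set.mem_ofPred_eq, dist_comm]
    exact hd.trans (le_max_left _ _)

lemma memUS_univ_inter [MetricSpace X] {ι : Type*} [Finite ι] {U : ι → Set X}
    (hU : IsCoarseCover U) {φ : ℕ → X} (hφ : IsCoarseMap φ) :
    memUS U (Set.univ ∩ {i | CloseSets (Set.range φ) (U i)}) φ := by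
  -- Testing the coentourage condition against the diagonal bounds the set of uncovered points.
  obtain ⟨B, hB, hsub⟩ := hU {p | dist p.1 p.2 ≤ 0} ⟨0, fun p hp => hp⟩
  refine memUS_inter U hφ Set.univ 0 (isBoundedSet_iff.1 hB) fun n => ?_
  by_cases hn : ∃ i, φ n ∈ U i
  · obtain ⟨i, hi⟩ := hn
    exact Or.inr ⟨i, trivial, φ n, hi, (dist_self _).le⟩
  · refine Or.inl (hsub (show (φ n, φ n) ∈ _ from ⟨(dist_self _).le, fun hc => hn ?_⟩)).1
    obtain ⟨i, hi⟩ := Set.mem_iUnion.1 hc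
    exact ⟨i, hi.1⟩

/-- One half of `ψ ∈ 𝒰[φ]` suffices to place `φ` in `𝒰(I(ψ) ∩ I(φ))`. -/
lemma memUS_of_subset_star [MetricSpace X] {ι : Type*} [Finite ι] {U : ι → Set X}
    {φ ψ : ℕ → X} (hφ : IsCoarseMap φ) {E : Set (X × X)} (hE : IsEntourage E)
    (h : Set.range φ ⊆ entImage E (coarseStar (Set.range ψ) U)) :
    memUS U ({i | CloseSets (Set.range ψ) (U i)} ∩ {i | CloseSets (Set.range φ) (U i)}) φ := by
  obtain ⟨R, hR⟩ := hE
  refine memUS_inter U hφ _ R Bornology.isBounded_empty fun n => Or.inr ?_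
  obtain ⟨u, hu, hm⟩ := h ⟨n, rfl⟩
  obtain ⟨i, hi, hui⟩ := Set.mem_iUnion₂.1 hu
  exact ⟨i, hi, u, hui, (dist_comm _ _).trans_le (hR _ hm)⟩

lemma memUS.subset_star [MetricSpace X] {ι : Type*} {U : ι → Set X} {S : Set ι} {φ : ℕ → X}
    (h : memUS U S φ) : ⋃ i ∈ S, U i ⊆ coarseStar (Set.range φ) U :=
  Set.biUnion_subset_biUnion_left h.1

lemma inUNbhd_of_memUS [MetricSpace X] {ι : Type*} {U : ι → Set X} {S : Set ι} {φ ψ : ℕ → X}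
    (hφ : memUS U S φ) (hψ : memUS U S ψ) : inUNbhd U φ ψ := by
  obtain ⟨E, ⟨C, hC⟩, hE⟩ := hφ.2
  obtain ⟨F, ⟨D, hD⟩, hF⟩ := hψ.2
  refine ⟨E ∪ F, ⟨max C D, ?_⟩, fun x hx => ?_, fun x hx => ?_⟩
  · rintro p (hp | hp)
    · exact (hC p hp).trans (le_max_left _ _)
    · exact (hD p hp).trans (le_max_right _ _)
  · obtain ⟨u, hu, hm⟩ := hF hx
    exact ⟨u, hφ.subset_star hu, Or.inr hm⟩
  · obtain ⟨u, hu, hm⟩ := hE hx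
    exact ⟨u, hψ.subset_star hu, Or.inl hm⟩

/-- the uniform space of ends is totally bounded. -/
theorem soe_totallyBounded [MetricSpace X] {ι : Type} [Fintype ι]
    (U : ι → Set X) (hU : IsCoarseCover U) :
    -- totally bounded: finitely many sets covering soe(X), each D_𝒰-small
    (∃ (m : ℕ) (A : Fin m → (ℕ → X) → Prop),
      (∀ φ : ℕ → X, IsCoarseMap φ → ∃ k, A k φ) ∧
      (∀ (k : Fin m) (φ ψ : ℕ → X), IsCoarseMap φ → IsCoarseMap ψ →
        A k φ → A k ψ → inUNbhd U φ ψ)) ∧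
    -- precisely: q ∈ 𝒰[p] iff p, q ∈ 𝒰(S) for some S ⊆ I
    (∀ φ ψ : ℕ → X, IsCoarseMap φ → IsCoarseMap ψ →
      (inUNbhd U φ ψ ↔ ∃ S : Set ι, memUS U S φ ∧ memUS U S ψ)) ∧
    -- and (𝒰(S))_{S ⊆ I} is a (finite) cover of soe(X)
    (∀ φ : ℕ → X, IsCoarseMap φ → ∃ S : Set ι, memUS U S φ) := by
  classical
  refine ⟨⟨Fintype.card (Set ι), fun k => memUS U ((Fintype.equivFin (Set ι)).symm k), ?_, ?_⟩,
    ?_, fun φ hφ => ⟨_, memUS_univ_inter hU hφ⟩⟩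
  · intro φ hφ
    exact ⟨Fintype.equivFin (Set ι) _, by simpa using memUS_univ_inter hU hφ⟩
  · intro k φ ψ _ _ h₁ h₂
    exact inUNbhd_of_memUS h₁ h₂
  · intro φ ψ hφ hψ
    constructor
    · rintro ⟨E, hE, h₁, h₂⟩
      refine ⟨_, memUS_of_subset_star hφ hE h₂, ?_⟩
      rw [Set.inter_comm]
      exact memUS_of_subset_star hψ hE h₁
    · rintro ⟨S, h₁, h₂⟩
      exact inUNbhd_of_memUS h₁ h₂
end
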